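/- arXiv:2410.15371 — 2 statements merged into one kernel-verified Lean document; each statement's English description precedes it below -/
import Mathlib

section
/- Let α_t, σ_t, α_T, σ_T be positive reals with SNR_T < SNR_t, and let a_t, b_t, c_t² be the bridge coefficients. Then for all real numbers z₀, z_t, z_T, the product of Gaussian density values N(z_T; (α_T/α_t)·z_t, σ_T² − (α_T/α_t)²·σ_t²) · N(z_t; α_t·z₀, σ_t²) equals N(z_T; α_T·z₀, σ_T²) · N(z_t; a_t·z₀ + b_t·z_T, c_t²), where N(x; μ, v) = (2πv)^{-1/2}·exp(−(x−μ)²/(2v)) denotes the one-dimensional Gaussian density with mean μ and variance v evaluated at x. (This identifies the bridge perturbation kernel p_{t,bridge}(z_t | z₀, z_T) obtained by Bayes' rule as the Gaussian N(z_t; a_t z₀ + b_t z_T, c_t²).) -/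
/-!
The process is linear Gaussian: given `z₀`, the state `z_t` has law `N(α_t z₀, σ_t²)`, and given
`z_t`, the state `z_T` has law `N(k z_t, s)` with `k = α_T / α_t` and `s = σ_T² - k² σ_t²`.
Completing the square in `z_t` splits such a joint density into the marginal of `z_T`, whose
variance is `s + k² σ_t² = σ_T²`, and the posterior of `z_t`. The bridge coefficients are the
posterior parameters written in terms of `SNR_T / SNR_t = k² σ_t² / σ_T²`.
-/

open Real

/-- One-dimensional Gaussian density with mean `μ` and variance `v`, evaluated at `x`. -/
noncomputable def gaussDensity (x μ v : ℝ) : ℝ :=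
  (Real.sqrt (2 * Real.pi * v))⁻¹ * Real.exp (-(x - μ) ^ 2 / (2 * v))

theorem gaussDensity_mul_gaussDensity {v : ℝ} (hv : 0 ≤ v) (x μ y ν w : ℝ) :
    gaussDensity x μ v * gaussDensity y ν w =
      (√((2 * π) ^ 2 * (v * w)))⁻¹ * exp (-((x - μ) ^ 2 / v + (y - ν) ^ 2 / w) / 2) := by
  have hnorm : √((2 * π) ^ 2 * (v * w)) = √(2 * π * v) * √(2 * π * w) := by
    rw [← sqrt_mul (by positivity)]
    congr 1
    ring
  have hexp : -((x - μ) ^ 2 / v + (y - ν) ^ 2 / w) / 2 =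
      -(x - μ) ^ 2 / (2 * v) + -(y - ν) ^ 2 / (2 * w) := by
    ring
  rw [gaussDensity, gaussDensity, hnorm, hexp, exp_add, mul_inv, mul_mul_mul_comm]

theorem sq_div_add_sq_div_eq_complete_square {F : Type*} [Field F] {k s v : F}
    (hs : s ≠ 0) (hv : v ≠ 0) (hsv : s + k ^ 2 * v ≠ 0) (m x y : F) :
    (y - k * x) ^ 2 / s + (x - m) ^ 2 / v =
      (y - k * m) ^ 2 / (s + k ^ 2 * v) +
        (x - (m + k * v / (s + k ^ 2 * v) * (y - k * m))) ^ 2 / (s * v / (s + k ^ 2 * v)) := by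
  field_simp
  ring

theorem gaussDensity_likelihood_mul_prior_eq_marginal_mul_posterior {s v : ℝ}
    (hs : 0 < s) (hv : 0 < v) (k m x y : ℝ) :
    gaussDensity y (k * x) s * gaussDensity x m v =
      gaussDensity y (k * m) (s + k ^ 2 * v) *
        gaussDensity x (m + k * v / (s + k ^ 2 * v) * (y - k * m))
          (s * v / (s + k ^ 2 * v)) := by
  have hsv : 0 < s + k ^ 2 * v := by positivity
  rw [gaussDensity_mul_gaussDensity hs.le, gaussDensity_mul_gaussDensity hsv.le,
    sq_div_add_sq_div_eq_complete_square hs.ne' hv.ne' hsv.ne', mul_div_cancel₀ _ hsv.ne']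

section BridgeCoefficients

/-- The signal-to-noise ratio `α² / σ²` of the perturbation kernel `N(α z₀, σ²)`, parametrized by
the standard deviation `σ`. -/
def snr {F : Type*} [Field F] (α σ : F) : F := α ^ 2 / σ ^ 2

variable {F : Type*} [Field F] {αt σt αT σT : F}

theorem transition_variance_eq_mul_one_sub_snr_ratio (hσT : σT ≠ 0) :
    σT ^ 2 - (αT / αt) ^ 2 * σt ^ 2 = σT ^ 2 * (1 - snr αT σT / snr αt σt) := by
  unfold snr
  field_simp

theorem posterior_gain_eq_snr_ratio_mul (hαT : αT ≠ 0) :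
    αT / αt * σt ^ 2 / σT ^ 2 = snr αT σT / snr αt σt * (αt / αT) := by
  unfold snr
  field_simp

theorem posterior_mean_eq_bridge_mean (hαt : αt ≠ 0) (hαT : αT ≠ 0) (z₀ zT : F) :
    αt * z₀ + αT / αt * σt ^ 2 / σT ^ 2 * (zT - αT * z₀) =
      αt * (1 - snr αT σT / snr αt σt) * z₀ + snr αT σT / snr αt σt * (αt / αT) * zT := by
  rw [posterior_gain_eq_snr_ratio_mul hαT]
  field_simp
  ring

theorem posterior_variance_eq_bridge_variance (hσT : σT ≠ 0) :
    (σT ^ 2 - (αT / αt) ^ 2 * σt ^ 2) * σt ^ 2 / σT ^ 2 =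
      σt ^ 2 * (1 - snr αT σT / snr αt σt) := by
  rw [transition_variance_eq_mul_one_sub_snr_ratio hσT]
  field_simp

end BridgeCoefficients

theorem transition_variance_pos {αt σt αT σT : ℝ} (hσT : σT ≠ 0)
    (hSNR : snr αT σT < snr αt σt) : 0 < σT ^ 2 - (αT / αt) ^ 2 * σt ^ 2 := by
  have hsnrT : 0 ≤ snr αT σT := div_nonneg (sq_nonneg αT) (sq_nonneg σT)
  have hratio : snr αT σT / snr αt σt < 1 := (div_lt_one (hsnrT.trans_lt hSNR)).2 hSNR
  rw [transition_variance_eq_mul_one_sub_snr_ratio hσT]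
  exact mul_pos (by positivity) (sub_pos.2 hratio)

/-- The product of the Gaussian densities appearing in the Bayes-rule computation of the
bridge perturbation kernel equals the product of `N(z_T; α_T z₀, σ_T²)` with the Gaussian
bridge kernel `N(z_t; a_t z₀ + b_t z_T, c_t²)`. -/
theorem bridge_perturbation_kernel_gaussian
    (αt σt αT σT : ℝ) (hαt : 0 < αt) (hσt : 0 < σt) (hαT : 0 < αT) (hσT : 0 < σT)
    (hSNR : αT ^ 2 / σT ^ 2 < αt ^ 2 / σt ^ 2) :
    ∀ z₀ zt zT : ℝ,
      gaussDensity zT ((αT / αt) * zt) (σT ^ 2 - (αT / αt) ^ 2 * σt ^ 2) *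
          gaussDensity zt (αt * z₀) (σt ^ 2) =
        gaussDensity zT (αT * z₀) (σT ^ 2) *
          gaussDensity zt
            ((αt * (1 - (αT ^ 2 / σT ^ 2) / (αt ^ 2 / σt ^ 2))) * z₀ +
              (((αT ^ 2 / σT ^ 2) / (αt ^ 2 / σt ^ 2)) * (αt / αT)) * zT)
            (σt ^ 2 * (1 - (αT ^ 2 / σT ^ 2) / (αt ^ 2 / σt ^ 2))) := by
  intro z₀ zt zT
  have hs : 0 < σT ^ 2 - (αT / αt) ^ 2 * σt ^ 2 := transition_variance_pos hσT.ne' hSNR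
  have hmean : αT / αt * (αt * z₀) = αT * z₀ := by
    rw [← mul_assoc, div_mul_cancel₀ _ hαt.ne']
  rw [gaussDensity_likelihood_mul_prior_eq_marginal_mul_posterior hs (pow_pos hσt 2),
    sub_add_cancel, hmean, posterior_mean_eq_bridge_mean hαt.ne' hαT.ne',
    posterior_variance_eq_bridge_variance hσT.ne']
  rfl
end

section
/- (Parameterization of the denoising bridge score-matching target, Proposition 1, first part.) Let V be a vector space over ℝ. Let α_t, σ_t, α_T, σ_T be positive reals with SNR_T < SNR_t, and let a_t, b_t, c_t² be the bridge coefficients. For any z₀, z_t, z_T ∈ V, setting ε = σ_t⁻¹ • (z_t − α_t • z₀), the identity −(c_t²)⁻¹ • (z_t − a_t • z₀ − b_t • z_T) = −(σ_t)⁻¹ • ε − ((SNR_T/SNR_t) / (σ_t²·(1 − SNR_T/SNR_t))) • (z_t − (α_t/α_T) • z_T) holds. (Hence the Denoising Bridge Score Matching target ∇ log p_{t,bridge}(z_t | z₀, z_T) can be reparameterized as −(1/σ_t)·ε minus an analytically known correction term.) -/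
/-!
Write `r = SNR_T / SNR_t`. The bridge residual `z_t - a_t • z₀ - b_t • z_T` is the affine
combination, with weights `1 - r` and `r`, of the forward residual `z_t - α_t • z₀ = σ_t • ε` and
the endpoint residual `z_t - (α_t / α_T) • z_T`. Dividing by `c_t² = σ_t² (1 - r)` cancels the
weight `1 - r` of the former.
-/

theorem sub_smul_sub_smul_eq_smul_sub_add_smul_sub {R M : Type*} [CommRing R] [AddCommGroup M]
    [Module R M] (a b r : R) (x y z : M) :
    x - (a * (1 - r)) • y - (r * b) • z = (1 - r) • (x - a • y) + r • (x - b • z) := by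
  module

theorem bridge_score_parameterization_general {K V : Type*} [Field K] [AddCommGroup V] [Module K V]
    {α σ β r : K} (hσ : σ ≠ 0) (hr : r ≠ 1) {z₀ zt zT ε : V} (hε : ε = σ⁻¹ • (zt - α • z₀)) :
    -(σ ^ 2 * (1 - r))⁻¹ • (zt - (α * (1 - r)) • z₀ - (r * β) • zT) =
      -σ⁻¹ • ε - (r / (σ ^ 2 * (1 - r))) • (zt - β • zT) := by
  have one_sub_ne_zero : 1 - r ≠ 0 := sub_ne_zero.mpr hr.symm
  have forward_residual : zt - α • z₀ = σ • ε := by rw [hε, smul_inv_smul₀ hσ]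
  have noise_coeff : (σ ^ 2 * (1 - r))⁻¹ * ((1 - r) * σ) = σ⁻¹ := by field_simp
  calc
    -(σ ^ 2 * (1 - r))⁻¹ • (zt - (α * (1 - r)) • z₀ - (r * β) • zT)
      = -(σ ^ 2 * (1 - r))⁻¹ • ((1 - r) • σ • ε + r • (zt - β • zT)) := by
        rw [sub_smul_sub_smul_eq_smul_sub_add_smul_sub, forward_residual]
    _ = -((σ ^ 2 * (1 - r))⁻¹ * ((1 - r) * σ)) • ε -
          (r / (σ ^ 2 * (1 - r))) • (zt - β • zT) := by
        module
    _ = -σ⁻¹ • ε - (r / (σ ^ 2 * (1 - r))) • (zt - β • zT) := by rw [noise_coeff]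

/-- Parameterization of the denoising bridge score-matching target (Proposition 1, first part):
with `ε = σ_t⁻¹ • (z_t − α_t • z₀)`, the scaled residual
`−(c_t²)⁻¹ • (z_t − a_t • z₀ − b_t • z_T)` equals `−σ_t⁻¹ • ε` minus the analytically known
correction term. -/
theorem bridge_score_parameterization
    {V : Type*} [AddCommGroup V] [Module ℝ V]
    (αt σt αT σT : ℝ) (hαt : 0 < αt) (hσt : 0 < σt) (hαT : 0 < αT) (hσT : 0 < σT)
    (hSNR : αT ^ 2 / σT ^ 2 < αt ^ 2 / σt ^ 2)
    (z₀ zt zT : V) (ε : V) (hε : ε = σt⁻¹ • (zt - αt • z₀)) :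
    -(σt ^ 2 * (1 - (αT ^ 2 / σT ^ 2) / (αt ^ 2 / σt ^ 2)))⁻¹ •
        (zt - (αt * (1 - (αT ^ 2 / σT ^ 2) / (αt ^ 2 / σt ^ 2))) • z₀ -
          (((αT ^ 2 / σT ^ 2) / (αt ^ 2 / σt ^ 2)) * (αt / αT)) • zT) =
      -σt⁻¹ • ε -
        (((αT ^ 2 / σT ^ 2) / (αt ^ 2 / σt ^ 2)) /
            (σt ^ 2 * (1 - (αT ^ 2 / σT ^ 2) / (αt ^ 2 / σt ^ 2)))) •
          (zt - (αt / αT) • zT) := by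
  have snr_ratio_lt_one : (αT ^ 2 / σT ^ 2) / (αt ^ 2 / σt ^ 2) < 1 :=
    (div_lt_one (by positivity)).mpr hSNR
  exact bridge_score_parameterization_general hσt.ne' snr_ratio_lt_one.ne hε
end
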